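/- Let n ≥ 1 and let s_1 ≤ s_2 ≤ ... ≤ s_n be integers with 0 ≤ s_1. Then lim_{N→∞} M(N) · [∏_{k=1}^{n} (s_k + k - 1)!] / (N^{s_1 + ... + s_n} · ∏_{1 ≤ i < j ≤ n} (s_j + j - s_i - i)) = 1; equivalently, M(N) = [∏_{k=1}^{n} N^{s_k} / (s_k + k - 1)!] · [∏_{1 ≤ i < j ≤ n} (s_j + j - s_i - i)] · (1 + o(1)) as N → ∞. (Note ∏_{1 ≤ i < j ≤ n} (s_j + j - s_i - i) > 0 since the s_k are weakly increasing.) -/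

import Mathlib

open Finset Filter

/-- Shifted highest-weight coordinates `a_k = N - 2 s_k + 2(n-k) + 1`
(0-based index `k : Fin n` corresponds to the 1-based index `k+1`). -/
def aCoord (n : ℕ) (s : Fin n → ℤ) (N : ℕ) (k : Fin n) : ℤ :=
  (N : ℤ) - 2 * s k + 2 * ((n : ℤ) - 1 - (k : ℕ)) + 1

/-- Multiplicity `M(N)` of the irreducible `so(2n+1)`-representation with
rescaled highest-weight coordinates `λ_k = N - 2 s_k` in the `N`-th tensor
power of the spinor representation. -/
noncomputable def Mmult (n : ℕ) (s : Fin n → ℤ) (N : ℕ) : ℝ :=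
  (∏ k : Fin n,
      (Nat.factorial (N + 2 * (k : ℕ)) : ℝ) /
        ((2 : ℝ) ^ (2 * (k : ℕ)) *
          (Nat.factorial (((N : ℤ) + aCoord n s N k + 2 * n - 1) / 2).toNat : ℝ) *
          (Nat.factorial (((N : ℤ) - aCoord n s N k + 2 * n - 1) / 2).toNat : ℝ))) *
    (∏ l : Fin n, (aCoord n s N l : ℝ)) *
    (∏ i : Fin n, ∏ j ∈ Finset.Ioi i,
      ((aCoord n s N i : ℝ) ^ 2 - (aCoord n s N j : ℝ) ^ 2))

/-!
Put `m = N + 2n - 1` and `t_k = s_k + k`, with `k` counted from `0`. Then `a_k = m - 2 t_k` and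
`a_i² - a_j² = 4 (m - t_i - t_j) (t_j - t_i)`. The factorials in the denominators are `t_k!` and
`(m - t_k)!`, while reversing the order of the numerators turns them into `(m - (2k + 1))!`.
Collecting one factor `4` per pair `i < j` cancels the powers of two, so that exactly
`M(N) = ∏_k C(m, t_k) (m - 2 t_k) / (m (m - 1) ⋯ (m - 2k)) · ∏_{i<j} (m - t_i - t_j) (t_j - t_i)`.
As `m → ∞` the `k`-th factor is equivalent to `m ^ (t_k - 2k) / t_k!`, each pair contributes one
further factor `m` (hence `m ^ k` for the pairs with larger index `k`), and `m` is equivalent to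
`N`, so that the exponents add up to `∑ (t_k - k) = ∑ s_k`.
-/

open Asymptotics
open scoped Nat Topology

lemma prod_prod_Ioi_const {M : Type*} [CommMonoid M] (n : ℕ) (c : M) :
    ∏ i : Fin n, ∏ _j ∈ Ioi i, c = ∏ k : Fin n, c ^ (k : ℕ) := by
  rw [prod_comm' (t' := univ) (s' := fun j => Iio j) (by simp)]
  simp

lemma isEquivalent_natCast_sub_const (c : ℝ) :
    (fun m : ℕ => (m : ℝ) - c) ~[atTop] fun m => (m : ℝ) :=
  IsEquivalent.refl.sub_isLittleO
    ((isLittleO_const_id_atTop c).comp_tendsto tendsto_natCast_atTop_atTop)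

section BinomialForm

variable {n : ℕ}

/-- The multiplicity in the variables `m = N + 2n - 1` and `t_k = s_k + k` (`k` counted from `0`),
as a quotient of binomial coefficients by falling factorials, free of powers of two. -/
noncomputable def binomialMult (t : Fin n → ℕ) (m : ℕ) : ℝ :=
  (∏ k : Fin n, (m.choose (t k) : ℝ) * (m - 2 * t k) / m.descFactorial (2 * k + 1)) *
    ∏ i : Fin n, ∏ j ∈ Ioi i, ((m : ℝ) - t i - t j) * ((t j : ℝ) - t i)

variable {s : Fin n → ℤ} {t : Fin n → ℕ} {N m : ℕ}

lemma aCoord_eq_sub_two_mul (hst : ∀ k, s k + (k : ℕ) = t k) (hm : m + 1 = N + 2 * n)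
    (k : Fin n) : aCoord n s N k = m - 2 * t k := by
  have := hst k
  unfold aCoord
  lia

lemma prod_aCoord_sq_sub_sq (hst : ∀ k, s k + (k : ℕ) = t k) (hm : m + 1 = N + 2 * n) :
    ∏ i : Fin n, ∏ j ∈ Ioi i, ((aCoord n s N i : ℝ) ^ 2 - (aCoord n s N j : ℝ) ^ 2) =
      (∏ k : Fin n, (2 : ℝ) ^ (2 * (k : ℕ))) *
        ∏ i : Fin n, ∏ j ∈ Ioi i, ((m : ℝ) - t i - t j) * ((t j : ℝ) - t i) := by
  have hfactor (i j : Fin n) : (aCoord n s N i : ℝ) ^ 2 - (aCoord n s N j : ℝ) ^ 2 =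
      2 ^ 2 * (((m : ℝ) - t i - t j) * ((t j : ℝ) - t i)) := by
    simp only [aCoord_eq_sub_two_mul hst hm]
    push_cast
    ring
  simp only [hfactor, prod_mul_distrib, prod_prod_Ioi_const, pow_mul]

lemma prod_factorial_add_two_mul (hm : m + 1 = N + 2 * n) :
    ∏ k : Fin n, ((N + 2 * (k : ℕ))! : ℝ) =
      ∏ k : Fin n, (m ! : ℝ) / m.descFactorial (2 * k + 1) := by
  rw [← Equiv.prod_comp Fin.revPerm]
  refine prod_congr rfl fun k _ => ?_
  have hk : 2 * (k : ℕ) + 1 ≤ m := by lia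
  have hrev : N + 2 * (Fin.revPerm k : ℕ) = m - (2 * k + 1) := by
    rw [Fin.revPerm_apply, Fin.val_rev]
    lia
  have hdesc : (m.descFactorial (2 * k + 1) : ℝ) ≠ 0 := by
    exact_mod_cast (Nat.descFactorial_pos.2 hk).ne'
  rw [hrev, eq_div_iff hdesc]
  exact_mod_cast Nat.factorial_mul_descFactorial hk

theorem Mmult_eq_binomialMult (hst : ∀ k, s k + (k : ℕ) = t k) (hm : m + 1 = N + 2 * n)
    (htm : ∀ k, t k ≤ m) : Mmult n s N = binomialMult t m := by
  have hplus (k : Fin n) : (((N : ℤ) + aCoord n s N k + 2 * n - 1) / 2).toNat = m - t k := by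
    rw [aCoord_eq_sub_two_mul hst hm]
    lia
  have hminus (k : Fin n) : (((N : ℤ) - aCoord n s N k + 2 * n - 1) / 2).toNat = t k := by
    rw [aCoord_eq_sub_two_mul hst hm]
    lia
  have hpow : ∏ k : Fin n, (2 : ℝ) ^ (2 * (k : ℕ)) ≠ 0 :=
    prod_ne_zero_iff.2 fun _ _ => by positivity
  rw [Mmult, binomialMult, prod_aCoord_sq_sub_sq hst hm]
  simp only [hplus, hminus]
  simp only [Nat.cast_choose ℝ (htm _), aCoord_eq_sub_two_mul hst hm, prod_div_distrib,
    prod_mul_distrib, prod_factorial_add_two_mul hm]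
  push_cast
  field_simp

theorem binomialMult_isEquivalent (t : Fin n → ℕ) :
    binomialMult t ~[atTop] fun m : ℕ =>
      (∏ k : Fin n, (m : ℝ) ^ ((t k : ℤ) - (k : ℕ)) / (t k)!) *
        ∏ i : Fin n, ∏ j ∈ Ioi i, ((t j : ℝ) - t i) := by
  have hweight (k : Fin n) :
      (fun m : ℕ => (m.choose (t k) : ℝ) * (m - 2 * t k) / m.descFactorial (2 * k + 1)) ~[atTop]
        fun m => (m : ℝ) ^ t k / (t k)! * m / (m : ℝ) ^ (2 * (k : ℕ) + 1) :=
    ((isEquivalent_choose (t k)).mul (isEquivalent_natCast_sub_const _)).div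
      (isEquivalent_descFactorial _)
  have hpair (i j : Fin n) :
      (fun m : ℕ => ((m : ℝ) - t i - t j) * ((t j : ℝ) - t i)) ~[atTop]
        fun m => (m : ℝ) * ((t j : ℝ) - t i) := by
    simp only [sub_sub]
    exact (isEquivalent_natCast_sub_const _).mul IsEquivalent.refl
  refine ((IsEquivalent.finsetProd fun k _ => hweight k).mul (IsEquivalent.finsetProd fun i _ =>
    IsEquivalent.finsetProd fun j _ => hpair i j)).congr_right ?_
  filter_upwards [eventually_ne_atTop 0] with m hm
  have hm' : (m : ℝ) ≠ 0 := by exact_mod_cast hm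
  simp only [Pi.mul_apply, prod_mul_distrib, prod_prod_Ioi_const]
  rw [← mul_assoc, ← prod_mul_distrib]
  congr 1
  refine prod_congr rfl fun k _ => ?_
  rw [zpow_sub₀ hm', zpow_natCast, zpow_natCast]
  field_simp
  ring

end BinomialForm

theorem Mmult_isEquivalent {n : ℕ} {s : Fin n → ℤ} (hs : ∀ k, 0 ≤ s k + (k : ℕ)) :
    Mmult n s ~[atTop] fun N : ℕ =>
      (∏ k : Fin n, (N : ℝ) ^ s k / (s k + (k : ℕ)).toNat !) *
        ∏ i : Fin n, ∏ j ∈ Ioi i, ((s j : ℝ) + (j : ℕ) - s i - (i : ℕ)) := by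
  choose t hst using fun k => Int.eq_ofNat_of_zero_le (hs k)
  have hshift : Tendsto (fun N : ℕ => N + 2 * n - 1) atTop atTop :=
    (tendsto_sub_atTop_nat 1).comp (tendsto_add_atTop_nat (2 * n))
  have hMmult : Mmult n s =ᶠ[atTop] fun N => binomialMult t (N + 2 * n - 1) := by
    filter_upwards [eventually_ge_atTop 1,
      hshift.eventually (eventually_all.2 fun k => eventually_ge_atTop (t k))] with N hN ht
    exact Mmult_eq_binomialMult hst (by lia) ht
  have hcast : (fun N : ℕ => ((N + 2 * n - 1 : ℕ) : ℝ)) ~[atTop] fun N => (N : ℝ) := by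
    refine (isEquivalent_natCast_sub_const (1 - 2 * n)).congr_left ?_
    filter_upwards [eventually_ge_atTop 1] with N hN
    rw [Nat.cast_sub (by lia)]
    push_cast
    ring
  have hexp (k : Fin n) : (t k : ℤ) - (k : ℕ) = s k := by rw [← hst, add_sub_cancel_right]
  have hdiff (i j : Fin n) : (s j : ℝ) + (j : ℕ) - s i - (i : ℕ) = t j - t i := by
    rw [sub_sub]
    exact_mod_cast congrArg₂ (fun a b : ℤ => (a : ℝ) - b) (hst j) (hst i)
  simp only [hst, Int.toNat_natCast, hdiff]
  refine hMmult.trans_isEquivalent (((binomialMult_isEquivalent t).comp_tendsto hshift).trans ?_)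
  simp only [Function.comp_def, hexp]
  exact (IsEquivalent.finsetProd fun k _ => (hcast.zpow (s k)).div IsEquivalent.refl).mul
    IsEquivalent.refl

theorem multiplicity_asymptotics_general (n : ℕ) (s : Fin n → ℤ)
    (hs : ∀ k, 0 ≤ s k + (k : ℕ)) (hinj : Function.Injective fun k => s k + (k : ℕ)) :
    Tendsto
      (fun N : ℕ =>
        Mmult n s N * (∏ k : Fin n, ((s k + (k : ℕ)).toNat ! : ℝ)) /
          ((N : ℝ) ^ (∑ i : Fin n, (s i : ℝ)) *
            ∏ i : Fin n, ∏ j ∈ Ioi i, ((s j : ℝ) + (j : ℕ) - (s i : ℝ) - (i : ℕ))))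
      atTop (𝓝 1) := by
  have hdiff : ∏ i : Fin n, ∏ j ∈ Ioi i, ((s j : ℝ) + (j : ℕ) - s i - (i : ℕ)) ≠ 0 := by
    refine prod_ne_zero_iff.2 fun i _ => prod_ne_zero_iff.2 fun j hj => ?_
    rw [sub_sub, sub_ne_zero]
    exact_mod_cast hinj.ne (mem_Ioi.1 hj).ne'
  have hne : ∀ᶠ N : ℕ in atTop, (∏ k : Fin n, (N : ℝ) ^ s k / (s k + (k : ℕ)).toNat !) *
      ∏ i : Fin n, ∏ j ∈ Ioi i, ((s j : ℝ) + (j : ℕ) - s i - (i : ℕ)) ≠ 0 := by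
    filter_upwards [eventually_gt_atTop 0] with N hN
    exact mul_ne_zero (prod_ne_zero_iff.2 fun k _ => by positivity) hdiff
  refine ((isEquivalent_iff_tendsto_one hne).1 (Mmult_isEquivalent hs)).congr' ?_
  filter_upwards [eventually_gt_atTop 0] with N hN
  have hpow : (N : ℝ) ^ (∑ i : Fin n, (s i : ℝ)) = ∏ k : Fin n, (N : ℝ) ^ s k := by
    simp only [Real.rpow_sum_of_pos (Nat.cast_pos.2 hN), Real.rpow_intCast]
  rw [hpow, Pi.div_apply, prod_div_distrib, div_mul_eq_mul_div, div_div_eq_mul_div]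

/-- For `n ≥ 1` and weakly increasing nonnegative integers
`s_1 ≤ … ≤ s_n`, the multiplicity satisfies
`lim_{N→∞} M(N) ∏_k (s_k + k - 1)! / (N^{s_1+⋯+s_n} ∏_{i<j} (s_j + j - s_i - i)) = 1`,
i.e. `M(N) = [∏_k N^{s_k}/(s_k+k-1)!]·[∏_{i<j}(s_j+j-s_i-i)]·(1+o(1))`. -/
theorem multiplicity_asymptotics (n : ℕ) (hn : 1 ≤ n) (s : Fin n → ℤ)
    (hmono : Monotone s) (h0 : 0 ≤ s ⟨0, hn⟩) :
    Tendsto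
      (fun N : ℕ =>
        Mmult n s N * (∏ k : Fin n, (Nat.factorial (s k + (k : ℕ)).toNat : ℝ)) /
          ((N : ℝ) ^ (∑ i : Fin n, (s i : ℝ)) *
            ∏ i : Fin n, ∏ j ∈ Finset.Ioi i,
              ((s j : ℝ) + ((j : ℕ) : ℝ) - (s i : ℝ) - ((i : ℕ) : ℝ))))
      atTop (nhds 1) := by
  have hstrict : StrictMono fun k => s k + ((k : ℕ) : ℤ) :=
    hmono.add_strictMono fun _ _ h => by simpa
  exact multiplicity_asymptotics_general n s
    (fun k => add_nonneg (h0.trans (hmono (Nat.zero_le k))) (by positivity)) hstrict.injective
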